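/- Dominance of the right part of a BTP: Let π be an arbitrary binomial transport plan with nodes (x, x⁻, x⁺, y⁻⁻, y⁻⁺, y⁺⁻, y⁺⁺), with right part π_r and left part π_l. Then at least one of the following holds: (i) π_r is a suboptimal martingale transport plan for the cost function c(x,y) := |x+y|, i.e. there exists a finitely supported measure π̃_r on ℝ² having the same first and second marginals as π_r and satisfying the fiberwise barycenter (martingale) condition ∫_{{s}×ℝ} t dπ̃_r(s,t) = s·π̃_r({s}×ℝ) for every s ∈ ℝ, such that ∫ |x+y| dπ_r(x,y) < ∫ |x+y| dπ̃_r(x,y); or (ii) ∫ |x+y| dπ_l(x,y) ≤ ∫ |x+y| dπ_r(x,y). -/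

import Mathlib

open MeasureTheory

noncomputable section

/-- `λ⁺`: the weight of the upper branch of the first step. -/
def lamP (x xm xp : ℝ) : ℝ := if xm < xp then (x - xm) / (xp - xm) else 1

/-- `λ⁻ := 1 - λ⁺`. -/
def lamM (x xm xp : ℝ) : ℝ := 1 - lamP x xm xp

/-- `λ⁻⁺`: the upper weight of the second step out of `x⁻`. -/
def lamMP (xm ymm ymp : ℝ) : ℝ := if ymm < ymp then (xm - ymm) / (ymp - ymm) else 1

/-- `λ⁻⁻ := 1 - λ⁻⁺`. -/
def lamMM (xm ymm ymp : ℝ) : ℝ := 1 - lamMP xm ymm ymp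

/-- `λ⁺⁺`: the upper weight of the second step out of `x⁺`. -/
def lamPP (xp ypm ypp : ℝ) : ℝ := if ypm < ypp then (xp - ypm) / (ypp - ypm) else 1

/-- `λ⁺⁻ := 1 - λ⁺⁺`. -/
def lamPM (xp ypm ypp : ℝ) : ℝ := 1 - lamPP xp ypm ypp

/-- The binomial transport plan (BTP) with nodes `(x, x⁻, x⁺, y⁻⁻, y⁻⁺, y⁺⁻, y⁺⁺)`,
a probability measure on `ℝ³`. -/
def BTP (x xm xp ymm ymp ypm ypp : ℝ) : Measure (ℝ × ℝ × ℝ) :=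
  ENNReal.ofReal (lamM x xm xp * lamMM xm ymm ymp) • Measure.dirac (x, xm, ymm) +
  ENNReal.ofReal (lamM x xm xp * lamMP xm ymm ymp) • Measure.dirac (x, xm, ymp) +
  ENNReal.ofReal (lamP x xm xp * lamPM xp ypm ypp) • Measure.dirac (x, xp, ypm) +
  ENNReal.ofReal (lamP x xm xp * lamPP xp ypm ypp) • Measure.dirac (x, xp, ypp)

/-- The right part `π_r` of the BTP with the given nodes. -/
def rightPart (x xm xp ymm ymp ypm ypp : ℝ) : Measure (ℝ × ℝ) :=
  ENNReal.ofReal (lamM x xm xp * lamMM xm ymm ymp) • Measure.dirac (xm, ymm) +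
  ENNReal.ofReal (lamM x xm xp * lamMP xm ymm ymp) • Measure.dirac (xm, ymp) +
  ENNReal.ofReal (lamP x xm xp * lamPM xp ypm ypp) • Measure.dirac (xp, ypm) +
  ENNReal.ofReal (lamP x xm xp * lamPP xp ypm ypp) • Measure.dirac (xp, ypp)

/-- The left part `π_l` of the BTP with the given nodes. -/
def leftPart (x xm xp ymm ymp ypm ypp : ℝ) : Measure (ℝ × ℝ) :=
  ENNReal.ofReal (lamM x xm xp * lamMM xm ymm ymp) • Measure.dirac (x, ymm) +
  ENNReal.ofReal (lamM x xm xp * lamMP xm ymm ymp) • Measure.dirac (x, ymp) +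
  ENNReal.ofReal (lamP x xm xp * lamPM xp ypm ypp) • Measure.dirac (x, ypm) +
  ENNReal.ofReal (lamP x xm xp * lamPP xp ypm ypp) • Measure.dirac (x, ypp)

/-- A measure on `ℝ²` has finite support. -/
def FinSupp (ρ : Measure (ℝ × ℝ)) : Prop :=
  ∃ S : Finset (ℝ × ℝ), ρ ((↑S : Set (ℝ × ℝ))ᶜ) = 0

/-- Equality of the two marginals of two measures on `ℝ²`. -/
def SameMarginals (ρ ρ' : Measure (ℝ × ℝ)) : Prop :=
  ρ'.map Prod.fst = ρ.map Prod.fst ∧ ρ'.map Prod.snd = ρ.map Prod.snd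

/-- The fiberwise barycenter (martingale) condition:
`∫_{{s}×ℝ} t dρ(s,t) = s · ρ({s}×ℝ)` for every `s`. -/
def FiberBarycenter (ρ : Measure (ℝ × ℝ)) : Prop :=
  ∀ s : ℝ, ∫ p in {p : ℝ × ℝ | p.1 = s}, p.2 ∂ρ =
    s * (ρ {p : ℝ × ℝ | p.1 = s}).toReal

open Set
open scoped NNReal

/-! Let `α` and `β` be the fibers of `π_r` over `x⁻` and `x⁺`, of total mass one, and put
`g t = c (x⁺, t) - c (x⁻, t)`, which is monotone. Convexity of `c` in the first variable bounds the
left cost by the right cost plus `λ⁻ λ⁺ (∫ g ∂α - ∫ g ∂β)`, so (ii) holds if `∫ g ∂α ≤ ∫ g ∂β`.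
Otherwise the largest atom of `α` lies above the smallest atom of `β`. Mixing `α` with its largest
atom and `β` with its smallest one leads to measures with a common barycenter, still with bounded
density and still strictly ordered under `g`. Exchanging small multiples of them between the two
fibers keeps the marginals and the martingale condition and increases the cost. -/

section FiniteSupport

variable {X Y : Type*} [MeasurableSpace X] [MeasurableSpace Y]

/-- A measure is carried by a finite set. On `ℝ × ℝ` this is `FinSupp`; the fibers of a plan need
the same notion on `ℝ`. -/
def HasFiniteSupport (μ : Measure X) : Prop := ∃ S : Finset X, ∀ᵐ t ∂μ, t ∈ S

namespace HasFiniteSupport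

variable {μ ν : Measure X}

lemma finSupp {ρ : Measure (ℝ × ℝ)} (h : HasFiniteSupport ρ) : FinSupp ρ := h

lemma mono (hν : HasFiniteSupport ν) (h : μ ≪ ν) : HasFiniteSupport μ :=
  hν.imp fun _ hS => h.ae_le hS

lemma add (hμ : HasFiniteSupport μ) (hν : HasFiniteSupport ν) : HasFiniteSupport (μ + ν) := by
  classical
  obtain ⟨S, hS⟩ := hμ
  obtain ⟨T, hT⟩ := hν
  refine ⟨S ∪ T, ae_add_measure_iff.2 ⟨?_, ?_⟩⟩
  · filter_upwards [hS] with t ht using Finset.mem_union_left T ht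
  · filter_upwards [hT] with t ht using Finset.mem_union_right S ht

lemma smul (hμ : HasFiniteSupport μ) (r : ℝ≥0) : HasFiniteSupport (r • μ) :=
  hμ.mono Measure.smul_absolutelyContinuous

lemma map [MeasurableSingletonClass Y] (hμ : HasFiniteSupport μ) {f : X → Y} (hf : Measurable f) :
    HasFiniteSupport (μ.map f) := by
  classical
  obtain ⟨S, hS⟩ := hμ
  refine ⟨S.image f, (ae_map_iff hf.aemeasurable (Finset.measurableSet _)).2 ?_⟩
  filter_upwards [hS] with t ht using Finset.mem_image_of_mem f ht

lemma exists_atom_forall_le [NeZero μ] (hμ : HasFiniteSupport μ) {R : Type*} [LinearOrder R]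
    (f : X → R) : ∃ c, μ {c} ≠ 0 ∧ ∀ᵐ t ∂μ, f t ≤ f c := by
  classical
  obtain ⟨S, hS⟩ := hμ
  have ae_atom : ∀ᵐ t ∂μ, t ∈ S.filter fun t => μ {t} ≠ 0 := by
    have ae_ne : ∀ᵐ t ∂μ, ∀ s ∈ S, μ {s} = 0 → t ≠ s :=
      (ae_ball_iff S.countable_toSet).2 fun s _ => by
        by_cases hs : μ {s} = 0
        · filter_upwards [compl_mem_ae_iff.2 hs] with t ht _ using ht
        · exact .of_forall fun _ h => absurd h hs
    filter_upwards [hS, ae_ne] with t ht hne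
    exact Finset.mem_filter.2 ⟨ht, fun h => hne t ht h rfl⟩
  obtain ⟨c, hc, hmax⟩ := Finset.exists_max_image _ f ae_atom.exists
  exact ⟨c, (Finset.mem_filter.1 hc).2, ae_atom.mono hmax⟩

variable [MeasurableSingletonClass X]

lemma dirac (a : X) : HasFiniteSupport (Measure.dirac a) :=
  ⟨{a}, by simp [ae_dirac_eq]⟩

lemma integrable [IsFiniteMeasure μ] (hμ : HasFiniteSupport μ) (f : X → ℝ) : Integrable f μ := by
  obtain ⟨S, hS⟩ := hμ
  rw [← Measure.restrict_eq_self_of_ae_mem (s := (S : Set X)) hS]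
  exact IntegrableOn.finset

end HasFiniteSupport

end FiniteSupport

lemma isProbabilityMeasure_smul_add_smul {X : Type*} [MeasurableSpace X] (μ ν : Measure X)
    [IsProbabilityMeasure μ] [IsProbabilityMeasure ν] {u v : ℝ≥0} (huv : u + v = 1) :
    IsProbabilityMeasure (u • μ + v • ν) where
  measure_univ := by
    rw [Measure.add_apply, Measure.coe_nnreal_smul_apply, Measure.coe_nnreal_smul_apply,
      measure_univ, measure_univ, mul_one, mul_one, ← ENNReal.coe_add, huv, ENNReal.coe_one]

section Exchange

lemma smul_mix_dirac_le {X : Type*} [MeasurableSpace X] [MeasurableSingletonClass X]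
    (α : Measure X) [IsProbabilityMeasure α] (c : X) {u v : ℝ≥0} (huv : u + v = 1) :
    (α {c}).toNNReal • (u • α + v • Measure.dirac c) ≤ α := by
  have atom_le : (α {c}).toNNReal • Measure.dirac c ≤ α := by
    calc (α {c}).toNNReal • Measure.dirac c
        = α.restrict {c} := by
          rw [Measure.restrict_singleton, ← ENNReal.coe_toNNReal (measure_ne_top α {c})]; rfl
      _ ≤ α := Measure.restrict_le_self
  have self_le : (α {c}).toNNReal • α ≤ α := by
    have : (α {c}).toNNReal ≤ 1 := ENNReal.toNNReal_mono ENNReal.one_ne_top prob_le_one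
    calc (α {c}).toNNReal • α ≤ (1 : ℝ≥0) • α := by gcongr
      _ = α := one_smul _ _
  calc (α {c}).toNNReal • (u • α + v • Measure.dirac c)
      = u • ((α {c}).toNNReal • α) + v • ((α {c}).toNNReal • Measure.dirac c) := by
        rw [smul_add, smul_comm, smul_comm _ v]
    _ ≤ u • α + v • α := by gcongr
    _ = α := by rw [← add_smul, huv, one_smul]

variable {α β : Measure ℝ} [IsProbabilityMeasure α] [IsProbabilityMeasure β] {g : ℝ → ℝ}

lemma exists_mix_dirac (hα : HasFiniteSupport α) {c s : ℝ} (hc : α {c} ≠ 0)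
    (hs : s ∈ segment ℝ (∫ t, t ∂α) c) (g : ℝ → ℝ) :
    ∃ (α' : Measure ℝ) (ε : ℝ≥0), IsProbabilityMeasure α' ∧ 0 < ε ∧ ε • α' ≤ α ∧
      ∫ t, t ∂α' = s ∧ ∫ t, g t ∂α' ∈ segment ℝ (∫ t, g t ∂α) (g c) := by
  obtain ⟨u, v, hu, hv, huv, rfl⟩ := hs
  lift u to ℝ≥0 using hu
  lift v to ℝ≥0 using hv
  have integral_mix (f : ℝ → ℝ) :
      ∫ t, f t ∂(u • α + v • Measure.dirac c) = u • ∫ t, f t ∂α + v • f c := by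
    rw [integral_add_measure ((hα.smul u).integrable f)
        (((HasFiniteSupport.dirac c).smul v).integrable f),
      integral_smul_nnreal_measure, integral_smul_nnreal_measure, integral_dirac]
  have huv' : u + v = 1 := by exact_mod_cast huv
  refine ⟨u • α + v • Measure.dirac c, (α {c}).toNNReal,
    isProbabilityMeasure_smul_add_smul _ _ huv', ENNReal.toNNReal_pos hc (measure_ne_top _ _),
    smul_mix_dirac_le α c huv', integral_mix _, u, v, u.2, v.2, huv, (integral_mix g).symm⟩

lemma integral_le_or_exists_exchange (hα : HasFiniteSupport α) (hβ : HasFiniteSupport β)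
    (hαβ : ∫ t, t ∂α ≤ ∫ t, t ∂β) (hg : Monotone g) :
    ∫ t, g t ∂α ≤ ∫ t, g t ∂β ∨ ∃ A B : Measure ℝ, A ≤ α ∧ B ≤ β ∧ A univ = B univ ∧
      ∫ t, t ∂A = ∫ t, t ∂B ∧ ∫ t, g t ∂B < ∫ t, g t ∂A := by
  obtain ⟨c, hc, hαc⟩ := hα.exists_atom_forall_le id
  obtain ⟨b, hb, hβb⟩ := hβ.exists_atom_forall_le OrderDual.toDual
  have hpc : ∫ t, t ∂α ≤ c := (convex_Iic c).integral_mem isClosed_Iic hαc (hα.integrable _)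
  have hbq : b ≤ ∫ t, t ∂β := (convex_Ici b).integral_mem isClosed_Ici hβb (hβ.integrable _)
  have hgc : ∫ t, g t ∂α ≤ g c :=
    (convex_Iic (g c)).integral_mem isClosed_Iic (hαc.mono fun _ h => hg h) (hα.integrable g)
  have hgb : g b ≤ ∫ t, g t ∂β :=
    (convex_Ici (g b)).integral_mem isClosed_Ici (hβb.mono fun _ h => hg h) (hβ.integrable g)
  refine or_iff_not_imp_left.2 fun hlt => ?_
  have hbc : b ≤ c := le_of_not_ge fun hcb => hlt (hgc.trans ((hg hcb).trans hgb))
  obtain ⟨α', ε, _, hε, hα', hsα, hgα⟩ := exists_mix_dirac (s := max b (∫ t, t ∂α)) hα hc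
    (by rw [segment_eq_Icc hpc]; exact ⟨le_max_right _ _, max_le hbc hpc⟩) g
  obtain ⟨β', δ, _, hδ, hβ', hsβ, hgβ⟩ := exists_mix_dirac (s := max b (∫ t, t ∂α)) hβ hb
    (by rw [segment_symm, segment_eq_Icc hbq]; exact ⟨le_max_left _ _, max_le hbq hαβ⟩) g
  rw [segment_eq_Icc hgc] at hgα
  rw [segment_symm, segment_eq_Icc hgb] at hgβ
  have gain : ∫ t, g t ∂β' < ∫ t, g t ∂α' := hgβ.2.trans_lt ((not_le.1 hlt).trans_le hgα.1)
  have min_pos : 0 < min ε δ := lt_min hε hδ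
  refine ⟨min ε δ • α', min ε δ • β', ?_, ?_, ?_, ?_, ?_⟩
  · exact le_trans (by gcongr; exact min_le_left _ _) hα'
  · exact le_trans (by gcongr; exact min_le_right _ _) hβ'
  · simp only [Measure.coe_nnreal_smul_apply, measure_univ]
  · rw [integral_smul_nnreal_measure, integral_smul_nnreal_measure, hsα, hsβ]
  · rw [integral_smul_nnreal_measure, integral_smul_nnreal_measure]
    exact smul_lt_smul_of_pos_left gain min_pos

end Exchange

lemma FiberBarycenter.add {ρ ρ' : Measure (ℝ × ℝ)} [IsFiniteMeasure ρ] [IsFiniteMeasure ρ']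
    (hρ : FiberBarycenter ρ) (hρ' : FiberBarycenter ρ')
    (h : Integrable Prod.snd ρ) (h' : Integrable Prod.snd ρ') : FiberBarycenter (ρ + ρ') := by
  intro s
  rw [Measure.restrict_add, integral_add_measure h.restrict h'.restrict, hρ s, hρ' s, ← mul_add,
    Measure.add_apply, ENNReal.toReal_add (measure_ne_top _ _) (measure_ne_top _ _)]

lemma fiberBarycenter_map_prodMk {μ : Measure ℝ} {p : ℝ} (hμ : ∫ t, t ∂μ = p * μ.real univ) :
    FiberBarycenter (μ.map (Prod.mk p)) := by
  intro s
  have hs : MeasurableSet {z : ℝ × ℝ | z.1 = s} := measurable_fst (measurableSet_singleton s)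
  rw [measurableEmbedding_prodMk_left p |>.setIntegral_map, Measure.map_apply (by fun_prop) hs]
  by_cases hps : p = s
  · simpa [hps, Measure.real] using hμ
  · simp [hps]

/-- The plan with first marginal carried by `{p, q}` and (unnormalized) fibers `μ` over `p` and `ν`
over `q`. The right part of a BTP is of this form, and so is the left part, with `p = q = x`. -/
def twoFiberPlan (p q : ℝ) (μ ν : Measure ℝ) : Measure (ℝ × ℝ) :=
  μ.map (Prod.mk p) + ν.map (Prod.mk q)

/-- `π` is suboptimal for maximizing the cost `c` among the finitely supported
martingale transport plans with the same marginals. -/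
def IsSuboptimalPlan (c : ℝ × ℝ → ℝ) (π : Measure (ℝ × ℝ)) : Prop :=
  ∃ ρ : Measure (ℝ × ℝ), FinSupp ρ ∧ IsFiniteMeasure ρ ∧ SameMarginals π ρ ∧ FiberBarycenter ρ ∧
    ∫ z, c z ∂π < ∫ z, c z ∂ρ

section TwoFiberPlan

variable {p q : ℝ} {μ ν : Measure ℝ} {c : ℝ × ℝ → ℝ}

instance [IsFiniteMeasure μ] [IsFiniteMeasure ν] : IsFiniteMeasure (twoFiberPlan p q μ ν) := by
  unfold twoFiberPlan; infer_instance

lemma twoFiberPlan_map_fst :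
    (twoFiberPlan p q μ ν).map Prod.fst = μ univ • Measure.dirac p + ν univ • Measure.dirac q := by
  rw [twoFiberPlan, Measure.map_add _ _ measurable_fst, Measure.map_map (by fun_prop) (by fun_prop),
    Measure.map_map (by fun_prop) (by fun_prop)]
  exact congrArg₂ _ (Measure.map_const μ p) (Measure.map_const ν q)

lemma twoFiberPlan_map_snd : (twoFiberPlan p q μ ν).map Prod.snd = μ + ν := by
  rw [twoFiberPlan, Measure.map_add _ _ measurable_snd, Measure.map_map (by fun_prop) (by fun_prop),
    Measure.map_map (by fun_prop) (by fun_prop)]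
  exact congrArg₂ _ Measure.map_id Measure.map_id

lemma HasFiniteSupport.twoFiberPlan (hμ : HasFiniteSupport μ) (hν : HasFiniteSupport ν) :
    HasFiniteSupport (twoFiberPlan p q μ ν) :=
  (hμ.map measurable_prodMk_left).add (hν.map measurable_prodMk_left)

lemma integral_twoFiberPlan (hμ : Integrable (fun t => c (p, t)) μ)
    (hν : Integrable (fun t => c (q, t)) ν) :
    ∫ z, c z ∂(twoFiberPlan p q μ ν) = ∫ t, c (p, t) ∂μ + ∫ t, c (q, t) ∂ν := by
  have emb (s : ℝ) : MeasurableEmbedding (Prod.mk s : ℝ → ℝ × ℝ) :=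
    measurableEmbedding_prodMk_left s
  rw [twoFiberPlan, integral_add_measure ((emb p).integrable_map_iff.2 hμ)
    ((emb q).integrable_map_iff.2 hν), (emb p).integral_map, (emb q).integral_map]

lemma fiberBarycenter_twoFiberPlan [IsFiniteMeasure μ] [IsFiniteMeasure ν]
    (hμ : HasFiniteSupport μ) (hν : HasFiniteSupport ν)
    (hp : ∫ t, t ∂μ = p * μ.real univ) (hq : ∫ t, t ∂ν = q * ν.real univ) :
    FiberBarycenter (twoFiberPlan p q μ ν) :=
  (fiberBarycenter_map_prodMk hp).add (fiberBarycenter_map_prodMk hq)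
    ((hμ.map measurable_prodMk_left).integrable _) ((hν.map measurable_prodMk_left).integrable _)

lemma isSuboptimalPlan_of_exchange {A A' B B' : Measure ℝ} [IsFiniteMeasure A] [IsFiniteMeasure A']
    [IsFiniteMeasure B] [IsFiniteMeasure B'] (hA : HasFiniteSupport A) (hA' : HasFiniteSupport A')
    (hB : HasFiniteSupport B) (hB' : HasFiniteSupport B') (mass : A univ = B univ)
    (bary : ∫ t, t ∂A = ∫ t, t ∂B)
    (hp : ∫ t, t ∂(A + A') = p * (A + A').real univ)
    (hq : ∫ t, t ∂(B + B') = q * (B + B').real univ)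
    (gain : ∫ t, (c (q, t) - c (p, t)) ∂B < ∫ t, (c (q, t) - c (p, t)) ∂A) :
    IsSuboptimalPlan c (twoFiberPlan p q (A + A') (B + B')) := by
  have real_mass : A.real univ = B.real univ := congrArg ENNReal.toReal mass
  refine ⟨twoFiberPlan p q (B + A') (A + B'), ((hB.add hA').twoFiberPlan (hA.add hB')).finSupp,
    inferInstance, ⟨?_, ?_⟩, fiberBarycenter_twoFiberPlan (hB.add hA') (hA.add hB') ?_ ?_, ?_⟩
  · simp only [twoFiberPlan_map_fst, Measure.add_apply, mass]
  · simp only [twoFiberPlan_map_snd]; abel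
  · rw [integral_add_measure (hB.integrable _) (hA'.integrable _), ← bary,
      ← integral_add_measure (hA.integrable _) (hA'.integrable _), hp, measureReal_add_apply,
      measureReal_add_apply, real_mass]
  · rw [integral_add_measure (hA.integrable _) (hB'.integrable _), bary,
      ← integral_add_measure (hB.integrable _) (hB'.integrable _), hq, measureReal_add_apply,
      measureReal_add_apply, real_mass]
  · rw [integral_sub (hA.integrable _) (hA.integrable _),
      integral_sub (hB.integrable _) (hB.integrable _)] at gain
    rw [integral_twoFiberPlan ((hA.add hA').integrable _) ((hB.add hB').integrable _),
      integral_twoFiberPlan ((hB.add hA').integrable _) ((hA.add hB').integrable _),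
      integral_add_measure (hA.integrable _) (hA'.integrable _),
      integral_add_measure (hB.integrable _) (hB'.integrable _),
      integral_add_measure (hB.integrable _) (hA'.integrable _),
      integral_add_measure (hA.integrable _) (hB'.integrable _)]
    linarith

lemma isSuboptimalPlan_of_le_exchange {A B : Measure ℝ} [IsFiniteMeasure μ] [IsFiniteMeasure ν]
    (hμ : HasFiniteSupport μ) (hν : HasFiniteSupport ν) (hA : A ≤ μ) (hB : B ≤ ν)
    (mass : A univ = B univ) (bary : ∫ t, t ∂A = ∫ t, t ∂B)
    (hp : ∫ t, t ∂μ = p * μ.real univ) (hq : ∫ t, t ∂ν = q * ν.real univ)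
    (gain : ∫ t, (c (q, t) - c (p, t)) ∂B < ∫ t, (c (q, t) - c (p, t)) ∂A) :
    IsSuboptimalPlan c (twoFiberPlan p q μ ν) := by
  have := isFiniteMeasure_of_le μ hA
  have := isFiniteMeasure_of_le ν hB
  have decomp_μ : A + (μ - A) = μ := by rw [add_comm, Measure.sub_add_cancel_of_le hA]
  have decomp_ν : B + (ν - B) = ν := by rw [add_comm, Measure.sub_add_cancel_of_le hB]
  rw [← decomp_μ, ← decomp_ν]
  exact isSuboptimalPlan_of_exchange (hμ.mono hA.absolutelyContinuous)
    (hμ.mono Measure.sub_le.absolutelyContinuous) (hν.mono hB.absolutelyContinuous)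
    (hν.mono Measure.sub_le.absolutelyContinuous) mass bary (by rwa [decomp_μ]) (by rwa [decomp_ν])
    gain

variable {α β : Measure ℝ} [IsProbabilityMeasure α] [IsProbabilityMeasure β] {l m : ℝ≥0}

lemma integral_twoFiberPlan_collapse_le (hα : HasFiniteSupport α) (hβ : HasFiniteSupport β)
    (hlm : l + m = 1) (hc : ∀ t, ConvexOn ℝ univ fun s => c (s, t)) :
    ∫ z, c z ∂(twoFiberPlan (l * p + m * q) (l * p + m * q) (l • α) (m • β)) ≤
      ∫ z, c z ∂(twoFiberPlan p q (l • α) (m • β)) +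
        l * m * (∫ t, (c (q, t) - c (p, t)) ∂α - ∫ t, (c (q, t) - c (p, t)) ∂β) := by
  have hlm' : (l : ℝ) + m = 1 := by exact_mod_cast hlm
  have convex_bound {γ : Measure ℝ} [IsFiniteMeasure γ] (hγ : HasFiniteSupport γ) :
      ∫ t, c (l * p + m * q, t) ∂γ ≤ l * ∫ t, c (p, t) ∂γ + m * ∫ t, c (q, t) ∂γ := by
    rw [← integral_const_mul, ← integral_const_mul,
      ← integral_add (hγ.integrable _) (hγ.integrable _)]
    exact integral_mono (hγ.integrable _) (hγ.integrable _) fun t =>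
      (hc t).2 (mem_univ p) (mem_univ q) l.2 m.2 hlm'
  rw [integral_twoFiberPlan ((hα.smul l).integrable _) ((hβ.smul m).integrable _),
    integral_twoFiberPlan ((hα.smul l).integrable _) ((hβ.smul m).integrable _),
    integral_sub (hα.integrable _) (hα.integrable _),
    integral_sub (hβ.integrable _) (hβ.integrable _)]
  simp only [integral_smul_nnreal_measure, NNReal.smul_def, smul_eq_mul]
  have boundα := mul_le_mul_of_nonneg_left (convex_bound hα) l.2
  have boundβ := mul_le_mul_of_nonneg_left (convex_bound hβ) m.2
  have hl : (l : ℝ) = 1 - m := eq_sub_of_add_eq hlm'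
  simp only [NNReal.val_eq_coe, hl] at boundα boundβ ⊢
  linarith

lemma isSuboptimalPlan_or_integral_collapse_le (hα : HasFiniteSupport α) (hβ : HasFiniteSupport β)
    (hp : ∫ t, t ∂α = p) (hq : ∫ t, t ∂β = q) (hpq : p ≤ q) (hlm : l + m = 1)
    (hc : ∀ t, ConvexOn ℝ univ fun s => c (s, t))
    (hmono : Monotone fun t => c (q, t) - c (p, t)) :
    IsSuboptimalPlan c (twoFiberPlan p q (l • α) (m • β)) ∨
      ∫ z, c z ∂(twoFiberPlan (l * p + m * q) (l * p + m * q) (l • α) (m • β)) ≤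
        ∫ z, c z ∂(twoFiberPlan p q (l • α) (m • β)) := by
  have collapse := integral_twoFiberPlan_collapse_le (p := p) (q := q) hα hβ hlm hc
  rcases eq_zero_or_pos (l * m) with hlm0 | hlm0
  · right
    simpa only [← NNReal.coe_mul, hlm0, NNReal.coe_zero, zero_mul, add_zero] using collapse
  rcases integral_le_or_exists_exchange hα hβ (hp.trans_le (hpq.trans_eq hq.symm)) hmono with
    hle | ⟨A, B, hA, hB, mass, bary, gain⟩
  · right
    exact collapse.trans (add_le_of_nonpos_right
      (mul_nonpos_of_nonneg_of_nonpos (mul_nonneg l.2 m.2) (sub_nonpos.2 hle)))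
  left
  have min_pos : 0 < min l m :=
    lt_min (pos_of_mul_pos_left hlm0 m.2) (pos_of_mul_pos_right hlm0 l.2)
  refine isSuboptimalPlan_of_le_exchange (A := min l m • A) (B := min l m • B) (hα.smul l)
    (hβ.smul m) ?_ ?_ ?_ ?_ ?_ ?_ ?_
  · gcongr; exact min_le_left l m
  · gcongr; exact min_le_right l m
  · simp only [Measure.coe_nnreal_smul_apply, mass]
  · simp only [integral_smul_nnreal_measure, bary]
  · simp [integral_smul_nnreal_measure, hp, NNReal.smul_def, mul_comm]
  · simp [integral_smul_nnreal_measure, hq, NNReal.smul_def, mul_comm]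
  · rw [integral_smul_nnreal_measure, integral_smul_nnreal_measure]
    exact smul_lt_smul_of_pos_left gain min_pos

end TwoFiberPlan

section BinomialStep

variable {x a b : ℝ}

lemma lamP_nonneg (hx : a ≤ x) : 0 ≤ lamP x a b := by
  unfold lamP
  split_ifs with h
  · exact div_nonneg (sub_nonneg.2 hx) (sub_pos.2 h).le
  · exact zero_le_one

lemma lamM_nonneg (hx : x ≤ b) : 0 ≤ lamM x a b := by
  unfold lamM lamP
  split_ifs with h
  · rw [sub_nonneg, div_le_one (sub_pos.2 h)]; linarith
  · exact (sub_self 1).ge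

lemma lamM_mul_add_lamP_mul (ha : a ≤ x) (hb : x ≤ b) :
    lamM x a b * a + lamP x a b * b = x := by
  unfold lamM lamP
  split_ifs with h
  · have : b - a ≠ 0 := (sub_pos.2 h).ne'
    field_simp
    ring
  · linarith

lemma toNNReal_lamM_add_lamP (ha : a ≤ x) (hb : x ≤ b) :
    (lamM x a b).toNNReal + (lamP x a b).toNNReal = 1 := by
  rw [← Real.toNNReal_add (lamM_nonneg hb) (lamP_nonneg ha), lamM, sub_add_cancel,
    Real.toNNReal_one]

/-- The law of one step of the binomial tree, from `x` to `a` or `b`. It also describes the second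
steps, since `lamMP` and `lamPP` are `lamP` under other names. -/
def binomialStep (x a b : ℝ) : Measure ℝ :=
  (lamM x a b).toNNReal • Measure.dirac a + (lamP x a b).toNNReal • Measure.dirac b

lemma hasFiniteSupport_binomialStep : HasFiniteSupport (binomialStep x a b) :=
  ((HasFiniteSupport.dirac a).smul _).add ((HasFiniteSupport.dirac b).smul _)

lemma isProbabilityMeasure_binomialStep (ha : a ≤ x) (hb : x ≤ b) :
    IsProbabilityMeasure (binomialStep x a b) :=
  isProbabilityMeasure_smul_add_smul _ _ (toNNReal_lamM_add_lamP ha hb)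

lemma integral_binomialStep (ha : a ≤ x) (hb : x ≤ b) : ∫ t, t ∂(binomialStep x a b) = x := by
  rw [binomialStep, integral_add_measure (((HasFiniteSupport.dirac a).smul _).integrable _)
    (((HasFiniteSupport.dirac b).smul _).integrable _)]
  simp only [integral_smul_nnreal_measure, integral_dirac, NNReal.smul_def, smul_eq_mul,
    Real.coe_toNNReal _ (lamM_nonneg hb), Real.coe_toNNReal _ (lamP_nonneg ha),
    lamM_mul_add_lamP_mul ha hb]

end BinomialStep

lemma ofReal_smul_measure {X : Type*} [MeasurableSpace X] (r : ℝ) (μ : Measure X) :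
    ENNReal.ofReal r • μ = r.toNNReal • μ := rfl

section Parts

variable {x xm xp ymm ymp ypm ypp : ℝ}

lemma rightPart_eq_twoFiberPlan (h1 : xm ≤ x) (h2 : x ≤ xp) :
    rightPart x xm xp ymm ymp ypm ypp = twoFiberPlan xm xp
      ((lamM x xm xp).toNNReal • binomialStep xm ymm ymp)
      ((lamP x xm xp).toNNReal • binomialStep xp ypm ypp) := by
  simp only [rightPart, twoFiberPlan, binomialStep, Measure.map_add _ _ measurable_prodMk_left,
    Measure.map_smul, Measure.map_dirac' measurable_prodMk_left, smul_add, smul_smul,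
    ofReal_smul_measure, Real.toNNReal_mul (lamM_nonneg h2), Real.toNNReal_mul (lamP_nonneg h1),
    add_assoc]
  rfl

lemma leftPart_eq_twoFiberPlan (h1 : xm ≤ x) (h2 : x ≤ xp) :
    leftPart x xm xp ymm ymp ypm ypp = twoFiberPlan x x
      ((lamM x xm xp).toNNReal • binomialStep xm ymm ymp)
      ((lamP x xm xp).toNNReal • binomialStep xp ypm ypp) := by
  simp only [leftPart, twoFiberPlan, binomialStep, Measure.map_add _ _ measurable_prodMk_left,
    Measure.map_smul, Measure.map_dirac' measurable_prodMk_left, smul_add, smul_smul,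
    ofReal_smul_measure, Real.toNNReal_mul (lamM_nonneg h2), Real.toNNReal_mul (lamP_nonneg h1),
    add_assoc]
  rfl

end Parts

lemma monotone_add_sub_add_of_convexOn {f : ℝ → ℝ} (hf : ConvexOn ℝ univ f) {p q : ℝ}
    (hpq : p ≤ q) : Monotone fun t => f (q + t) - f (p + t) := by
  intro s t hst
  rcases hpq.eq_or_lt with rfl | hlt
  · simp only [sub_self, le_refl]
  -- `q + s` and `p + t` lie in `[p + s, q + t]`, at complementary ratios.
  have hd : 0 < (q - p) + (t - s) := by linarith
  set u := (q - p) / ((q - p) + (t - s)) with hu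
  set v := (t - s) / ((q - p) + (t - s)) with hv
  have hu0 : 0 ≤ u := div_nonneg (sub_nonneg.2 hpq) hd.le
  have hv0 : 0 ≤ v := div_nonneg (sub_nonneg.2 hst) hd.le
  have huv : u + v = 1 := by rw [hu, hv, ← add_div, div_self hd.ne']
  have hud : u * ((q - p) + (t - s)) = q - p := div_mul_cancel₀ _ hd.ne'
  have upper := hf.2 (mem_univ (p + s)) (mem_univ (q + t)) hv0 hu0 (by rw [add_comm, huv])
  have lower := hf.2 (mem_univ (p + s)) (mem_univ (q + t)) hu0 hv0 huv
  have eq_upper : v • (p + s) + u • (q + t) = q + s := by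
    simp only [smul_eq_mul]; linear_combination (p + s) * huv + hud
  have eq_lower : u • (p + s) + v • (q + t) = p + t := by
    simp only [smul_eq_mul]; linear_combination (q + t) * huv - hud
  rw [eq_upper] at upper
  rw [eq_lower] at lower
  simp only [smul_eq_mul] at upper lower
  have hv' : v = 1 - u := by linarith
  rw [hv'] at upper lower
  linarith

theorem btp_right_part_dominance_general {c : ℝ × ℝ → ℝ}
    (hc : ∀ t, ConvexOn ℝ univ fun s => c (s, t))
    (hmono : ∀ p q, p ≤ q → Monotone fun t => c (q, t) - c (p, t))
    {x xm xp ymm ymp ypm ypp : ℝ} (h1 : xm ≤ x) (h2 : x ≤ xp) (h3 : ymm ≤ xm) (h4 : xm ≤ ymp)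
    (h5 : ypm ≤ xp) (h6 : xp ≤ ypp) :
    IsSuboptimalPlan c (rightPart x xm xp ymm ymp ypm ypp) ∨
      ∫ z, c z ∂(leftPart x xm xp ymm ymp ypm ypp) ≤
        ∫ z, c z ∂(rightPart x xm xp ymm ymp ypm ypp) := by
  have := isProbabilityMeasure_binomialStep h3 h4
  have := isProbabilityMeasure_binomialStep h5 h6
  have hx : (lamM x xm xp).toNNReal * xm + (lamP x xm xp).toNNReal * xp = x := by
    rw [Real.coe_toNNReal _ (lamM_nonneg h2), Real.coe_toNNReal _ (lamP_nonneg h1),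
      lamM_mul_add_lamP_mul h1 h2]
  have dominance := isSuboptimalPlan_or_integral_collapse_le
    hasFiniteSupport_binomialStep hasFiniteSupport_binomialStep (integral_binomialStep h3 h4)
    (integral_binomialStep h5 h6) (h1.trans h2) (toNNReal_lamM_add_lamP h1 h2) hc
    (hmono xm xp (h1.trans h2))
  rwa [hx, ← rightPart_eq_twoFiberPlan h1 h2, ← leftPart_eq_twoFiberPlan h1 h2] at dominance

/-- Dominance of the right part of a BTP: either the right part is a suboptimal
martingale transport plan for the cost `|x + y|`, or its cost dominates the cost
of the left part. -/
theorem btp_right_part_dominance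
    (x xm xp ymm ymp ypm ypp : ℝ)
    (h1 : xm ≤ x) (h2 : x ≤ xp)
    (h3 : ymm ≤ xm) (h4 : xm ≤ ymp)
    (h5 : ypm ≤ xp) (h6 : xp ≤ ypp) :
    (∃ ρ : Measure (ℝ × ℝ), FinSupp ρ ∧ IsFiniteMeasure ρ ∧
        SameMarginals (rightPart x xm xp ymm ymp ypm ypp) ρ ∧ FiberBarycenter ρ ∧
        ∫ p : ℝ × ℝ, |p.1 + p.2| ∂(rightPart x xm xp ymm ymp ypm ypp) <
          ∫ p : ℝ × ℝ, |p.1 + p.2| ∂ρ) ∨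
    ∫ p : ℝ × ℝ, |p.1 + p.2| ∂(leftPart x xm xp ymm ymp ypm ypp) ≤
      ∫ p : ℝ × ℝ, |p.1 + p.2| ∂(rightPart x xm xp ymm ymp ypm ypp) := by
  exact btp_right_part_dominance_general (c := fun p => |p.1 + p.2|)
    (convexOn_univ_norm (E := ℝ)).translate_left
    (fun _ _ => monotone_add_sub_add_of_convexOn convexOn_univ_norm) h1 h2 h3 h4 h5 h6
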